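/- Let a, Γ satisfy 0 < a, 1 < Γ < 2, and 0 < a + Γ - 1 < 1, let ρ̃ ≥ 1/(Γ-1), P > 0, and c > 0 (representing m·n·e''_th/P). Then the determinant of the 4×4 symmetric matrix M with rows [[1+ρ̃, 0, -1, -1], [0, c, 0, 0], [-1, 0, 1/Γ, 0], [-1, 0, 0, 1/a]] equals (c/(aΓ))·(ρ̃ - (a+Γ-1)), and this determinant is strictly positive. -/

import Mathlib

theorem stmt_10 (a Γ ρ P c : ℝ) (ha : 0 < a) (hΓ1 : 1 < Γ) (hΓ2 : Γ < 2)
    (h1 : 0 < a + Γ - 1) (h2 : a + Γ - 1 < 1)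
    (hρ : 1/(Γ-1) ≤ ρ) (hP : 0 < P) (hc : 0 < c) :
    (Matrix.of ![![1+ρ, 0, -1, -1], ![0, c, 0, 0],
                 ![-1, 0, 1/Γ, 0], ![-1, 0, 0, 1/a]]).det
      = (c/(a*Γ)) * (ρ - (a+Γ-1)) ∧
    0 < (Matrix.of ![![1+ρ, 0, -1, -1], ![0, c, 0, 0],
                 ![-1, 0, 1/Γ, 0], ![-1, 0, 0, 1/a]]).det := by
  have hΓ : 0 < Γ := by linarith
  have key : (Matrix.of ![![1+ρ, 0, -1, -1], ![0, c, 0, 0],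
                 ![-1, 0, 1/Γ, 0], ![-1, 0, 0, 1/a]]).det
      = (c/(a*Γ)) * (ρ - (a+Γ-1)) := by
    simp [Matrix.det_succ_row_zero, Fin.sum_univ_succ, Fin.succAbove, Matrix.submatrix]
    field_simp
    ring
  refine ⟨key, ?_⟩
  rw [key]
  have h3 : 1 < 1/(Γ-1) := by
    rw [lt_div_iff₀ (by linarith)]
    linarith
  have h4 : 0 < ρ - (a+Γ-1) := by linarith
  positivity
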